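/- Let Φ be an irreducible root system inside R(V) of rank ≥ 4 in which every simple root is of type 2. Then Φ is of type D if and only if Φ contains a pair of conjugate simple roots; otherwise Φ is of type A. -/

import Mathlib

/-!
Since `V` spans a lattice of full rank, a root is determined by its coordinate vector
`(⟨a, v_i⟩)_i ∈ ℤ^m`, and `formV` is the standard inner product of coordinate vectors. The
simple roots become a set `T` of vectors `±e_i ± e_j` that is obtuse (`obtuse_of_base`),
connected (`conn_of_irred`) and, by linear independence, contained in an open half space
`φ > 0`.

A *chain* in `T` consists of signed unit vectors `u_0, …, u_k` on distinct coordinates such that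
all `u_t - u_{t+1}` lie in `T`. If `d ∈ T` is not one of these roots, obtuseness says
`⟨d, u_t⟩ ≤ ⟨d, u_{t+1}⟩`. As `d` has only two nonzero entries, a `d` that is positive at the end
`u_k` is either `u_k - u_{k+1}` for a new signed unit vector `u_{k+1}`, so that the chain can be
prolonged, or `u_{k-1} + u_k`; the remaining possibility `u_k - u_0` is excluded by `φ`, which
decreases along the chain (`IsChainT.extend`).

Without conjugate pairs `u_{k-1} + u_k`, which is conjugate to `u_{k-1} - u_k`, cannot occur.
Every root outside the chain that is not orthogonal to it prolongs the chain at one of its two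
ends, so by connectedness a maximal chain is all of `T`, and `T` is of type A.

A conjugate pair can be written `u_0 - u_1`, `-u_0 - u_1`, which gives `φ(u_0) + φ(u_1) < 0` and
rules out `u_{k-1} + u_k`. Obtuseness with both roots of the pair forces `⟨d, u_1⟩ ≥ |⟨d, u_0⟩|`,
so a further root can only prolong the chain at its end `u_k`. A maximal chain starting with the
pair therefore exhausts `T`, and `T` is of type D.

Conversely, in type D two of the three neighbours of the trivalent node share the same
coordinate with it, and being orthogonal they are conjugate (`conj_of_D`).
-/


open Finset

/-- The natural pairing of a functional `a ∈ N* = Hom(ℤ^n, ℤ)` (represented by its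
coordinate vector) with `x ∈ N = ℤ^n`. -/
def pairZ {n : ℕ} (a x : Fin n → ℤ) : ℤ := ∑ j, a j * x j

/-- The bilinear form `(α,β) = Σ_i ⟨α,v_i⟩⟨β,v_i⟩` on `N*`. -/
def formV {n m : ℕ} (v : Fin m → Fin n → ℤ) (a b : Fin n → ℤ) : ℤ :=
  ∑ i, pairZ a (v i) * pairZ b (v i)

/-- Type 1 element: `|⟨α,v_i⟩| = 1` for some `i` and `⟨α,v_k⟩ = 0` for `k ≠ i`. -/
def IsType1 {n m : ℕ} (v : Fin m → Fin n → ℤ) (a : Fin n → ℤ) : Prop :=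
  ∃ i, (pairZ a (v i) = 1 ∨ pairZ a (v i) = -1) ∧ ∀ k, k ≠ i → pairZ a (v k) = 0

/-- Type 2 element: `|⟨α,v_i⟩| = |⟨α,v_j⟩| = 1` for some `i ≠ j` and `⟨α,v_k⟩ = 0`
for `k ≠ i, j`. -/
def IsType2 {n m : ℕ} (v : Fin m → Fin n → ℤ) (a : Fin n → ℤ) : Prop :=
  ∃ i j, i ≠ j ∧ (pairZ a (v i) = 1 ∨ pairZ a (v i) = -1) ∧
    (pairZ a (v j) = 1 ∨ pairZ a (v j) = -1) ∧
    ∀ k, k ≠ i → k ≠ j → pairZ a (v k) = 0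

/-- The root system `R(V)` associated to the finite set `V = {v_i}`. -/
def RV {n m : ℕ} (v : Fin m → Fin n → ℤ) : Set (Fin n → ℤ) :=
  {a | IsType1 v a ∨ IsType2 v a}

/-- `Φ` is a subsystem of the set of roots `S`: it is contained in `S` and closed
under the reflections `r_a(b) = b − (2(b,a)/(a,a))·a` in its own elements. -/
def IsRootSubsystem {n m : ℕ} (v : Fin m → Fin n → ℤ)
    (S Φ : Set (Fin n → ℤ)) : Prop :=
  Φ ⊆ S ∧ ∀ a ∈ Φ, ∀ b ∈ Φ, b - ((2 * formV v b a) / formV v a a) • a ∈ Φ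

/-- `Δ` is a base (set of simple roots) of `Φ`: a linearly independent subset such
that every root of `Φ` is a nonnegative or nonpositive integral combination of `Δ`. -/
def IsBase {n m : ℕ} (v : Fin m → Fin n → ℤ)
    (Φ : Set (Fin n → ℤ)) (Δ : Finset (Fin n → ℤ)) : Prop :=
  ↑Δ ⊆ Φ ∧
  LinearIndependent ℚ (fun a : Δ => (fun j => ((a : Fin n → ℤ) j : ℚ) : Fin n → ℚ)) ∧
  ∀ b ∈ Φ, (∃ c : (Fin n → ℤ) → ℕ, b = ∑ a ∈ Δ, (c a : ℤ) • a) ∨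
    (∃ c : (Fin n → ℤ) → ℕ, b = -∑ a ∈ Δ, (c a : ℤ) • a)

/-- `Φ` is irreducible: nonempty and not a union of two nonempty mutually
orthogonal parts. -/
def IsIrred {n m : ℕ} (v : Fin m → Fin n → ℤ) (Φ : Set (Fin n → ℤ)) : Prop :=
  Φ.Nonempty ∧ ∀ Φ₁ Φ₂ : Set (Fin n → ℤ), Φ = Φ₁ ∪ Φ₂ →
    (∀ a ∈ Φ₁, ∀ b ∈ Φ₂, formV v a b = 0) → Φ₁ = ∅ ∨ Φ₂ = ∅

/-- Gram matrix of the simple roots of `A_ℓ` (all roots of squared length 2,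
simple roots forming a chain). -/
def gramA (ℓ : ℕ) (i j : Fin ℓ) : ℤ :=
  if i = j then 2
  else if (i : ℕ) + 1 = j ∨ (j : ℕ) + 1 = i then -1 else 0

/-- Gram matrix of the simple roots of `B_ℓ` (chain with a short simple root of
squared length 1 at the end). -/
def gramB (ℓ : ℕ) (i j : Fin ℓ) : ℤ :=
  if i = j then (if (i : ℕ) = ℓ - 1 then 1 else 2)
  else if (i : ℕ) + 1 = j ∨ (j : ℕ) + 1 = i then -1 else 0

/-- Gram matrix of the simple roots of `D_ℓ` (chain `0, …, ℓ−2` with the extra node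
`ℓ−1` attached to node `ℓ−3`). -/
def gramD (ℓ : ℕ) (i j : Fin ℓ) : ℤ :=
  if i = j then 2
  else if ((i : ℕ) + 1 = j ∧ (j : ℕ) ≤ ℓ - 2) ∨ ((j : ℕ) + 1 = i ∧ (i : ℕ) ≤ ℓ - 2) ∨
      ((i : ℕ) = ℓ - 3 ∧ (j : ℕ) = ℓ - 1) ∨ ((j : ℕ) = ℓ - 3 ∧ (i : ℕ) = ℓ - 1) then -1
  else 0

/-- Gram matrix of the simple roots of `E_ℓ` (`ℓ = 6, 7, 8`): chain `0, …, ℓ−2`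
with the extra node `ℓ−1` attached to node `2`. -/
def gramE (ℓ : ℕ) (i j : Fin ℓ) : ℤ :=
  if i = j then 2
  else if ((i : ℕ) + 1 = j ∧ (j : ℕ) ≤ ℓ - 2) ∨ ((j : ℕ) + 1 = i ∧ (i : ℕ) ≤ ℓ - 2) ∨
      ((i : ℕ) = 2 ∧ (j : ℕ) = ℓ - 1) ∨ ((j : ℕ) = 2 ∧ (i : ℕ) = ℓ - 1) then -1
  else 0

/-- The set of simple roots `Δ` realizes the Gram matrix `g` under some
enumeration. -/
def MatchesGram {n m : ℕ} (v : Fin m → Fin n → ℤ) (Δ : Finset (Fin n → ℤ))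
    (ℓ : ℕ) (g : Fin ℓ → Fin ℓ → ℤ) : Prop :=
  ∃ e : Fin ℓ → Fin n → ℤ, Function.Injective e ∧ (∀ i, e i ∈ Δ) ∧
    (∀ a ∈ Δ, ∃ i, e i = a) ∧ ∀ i j, formV v (e i) (e j) = g i j

def IsTypeA {n m : ℕ} (v : Fin m → Fin n → ℤ) (Δ : Finset (Fin n → ℤ)) : Prop :=
  ∃ ℓ, MatchesGram v Δ ℓ (gramA ℓ)

def IsTypeB {n m : ℕ} (v : Fin m → Fin n → ℤ) (Δ : Finset (Fin n → ℤ)) : Prop :=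
  ∃ ℓ, MatchesGram v Δ ℓ (gramB ℓ)

def IsTypeD {n m : ℕ} (v : Fin m → Fin n → ℤ) (Δ : Finset (Fin n → ℤ)) : Prop :=
  ∃ ℓ, 4 ≤ ℓ ∧ MatchesGram v Δ ℓ (gramD ℓ)

def IsTypeE {n m : ℕ} (v : Fin m → Fin n → ℤ) (Δ : Finset (Fin n → ℤ)) : Prop :=
  ∃ ℓ, (ℓ = 6 ∨ ℓ = 7 ∨ ℓ = 8) ∧ MatchesGram v Δ ℓ (gramE ℓ)

/-- Two type 2 elements of `R(V)` are conjugate if they are of the form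
`±e_i* ± e_j*` for a common pair `i ≠ j` and are linearly independent. -/
def ConjPair {n m : ℕ} (v : Fin m → Fin n → ℤ) (a b : Fin n → ℤ) : Prop :=
  ∃ i j, i ≠ j ∧ (pairZ a (v i) = 1 ∨ pairZ a (v i) = -1) ∧
    (pairZ a (v j) = 1 ∨ pairZ a (v j) = -1) ∧
    pairZ b (v i) = pairZ a (v i) ∧ pairZ b (v j) = - pairZ a (v j) ∧
    ∀ k, k ≠ i → k ≠ j → pairZ a (v k) = 0 ∧ pairZ b (v k) = 0

/-! ### Chains of type 2 vectors in `ℤ^m` -/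

/-- `a = ±e_i ± e_j` for some `i ≠ j`. -/
def IsT2 {m : ℕ} (a : Fin m → ℤ) : Prop :=
  ∃ i j p q, i ≠ j ∧ (p = 1 ∨ p = -1) ∧ (q = 1 ∨ q = -1) ∧
    a = Pi.single i p + Pi.single j q

/-- Conjugacy of two vectors of `ℤ^m`; `ConjPair v a b` is conjugacy of the coordinate
vectors of `a` and `b`. -/
def ConjT {m : ℕ} (a b : Fin m → ℤ) : Prop :=
  ∃ i j, i ≠ j ∧ (a i = 1 ∨ a i = -1) ∧ (a j = 1 ∨ a j = -1) ∧
    b i = a i ∧ b j = - a j ∧ ∀ k, k ≠ i → k ≠ j → a k = 0 ∧ b k = 0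

/-- The signed unit vectors `u_t = s_t e_{x_t}`, `t ≤ k`, lie on distinct coordinates and
all consecutive differences `u_t - u_{t+1}` belong to `T`. Values at indices above `k` are
irrelevant. -/
structure IsChainT {m : ℕ} (T : Finset (Fin m → ℤ)) (k : ℕ) (x : ℕ → Fin m) (s : ℕ → ℤ) :
    Prop where
  sign : ∀ t ≤ k, s t = 1 ∨ s t = -1
  inj : ∀ t ≤ k, ∀ t' ≤ k, x t = x t' → t = t'
  mem : ∀ t < k, (Pi.single (x t) (s t) - Pi.single (x (t + 1)) (s (t + 1)) : Fin m → ℤ) ∈ T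

/-- The properties of a set `T` of coordinate vectors of simple roots from which its type is
determined: obtuseness, connectedness, and a functional `φ` positive on `T` (which exists by
linear independence). -/
structure IsSimpleT {m : ℕ} (T : Finset (Fin m → ℤ)) (φ : Fin m → ℚ) : Prop where
  t2 : ∀ a ∈ T, IsT2 a
  obtuse : ∀ a ∈ T, ∀ b ∈ T, a ≠ b → a ⬝ᵥ b ≤ 0
  pos : ∀ a ∈ T, 0 < ∑ i, φ i * (a i : ℚ)
  conn : ∀ S ⊆ T, S.Nonempty → (∀ a ∈ S, ∀ b ∈ T, b ∉ S → a ⬝ᵥ b = 0) → S = T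

section Core

variable {m : ℕ} {T : Finset (Fin m → ℤ)} {φ : Fin m → ℚ} {k : ℕ} {x : ℕ → Fin m} {s : ℕ → ℤ}

lemma phi_single (φ : Fin m → ℚ) (i : Fin m) (p : ℤ) :
    ∑ l, φ l * ((Pi.single i p : Fin m → ℤ) l : ℚ) = φ i * p := by
  rw [Finset.sum_eq_single i]
  · simp
  · intro b _ hb; simp [hb]
  · simp

lemma IsChainT.step_dot (d : Fin m → ℤ) (t : ℕ) :
    (Pi.single (x t) (s t) - Pi.single (x (t + 1)) (s (t + 1)) : Fin m → ℤ) ⬝ᵥ d =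
      s t * d (x t) - s (t + 1) * d (x (t + 1)) := by
  simp [sub_dotProduct]

/-- The functional `φ` is strictly decreasing along a chain. -/
lemma IsChainT.phi_anti (hT : IsSimpleT T φ) (hc : IsChainT T k x s) :
    ∀ t ≤ k, ∀ t' < t, φ (x t) * s t < φ (x t') * s t' := by
  intro t
  induction t with
  | zero => intro _ t' h; omega
  | succ t ih =>
    intro htk t' ht'
    have h := hT.pos _ (hc.mem t (by omega))
    have e : ∀ l, φ l * (((Pi.single (x t) (s t) - Pi.single (x (t + 1)) (s (t + 1)) :
        Fin m → ℤ) l : ℤ) : ℚ) = φ l * ((Pi.single (x t) (s t) : Fin m → ℤ) l : ℚ) -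
        φ l * ((Pi.single (x (t + 1)) (s (t + 1)) : Fin m → ℤ) l : ℚ) := by
      intro l; rw [Pi.sub_apply]; push_cast; ring
    simp only [e, Finset.sum_sub_distrib, phi_single] at h
    rcases Nat.lt_succ_iff_lt_or_eq.mp ht' with h1 | h1
    · have := ih (by omega) t' h1; linarith
    · subst h1; linarith

/-- Obtuseness makes the signed coordinates `⟨d, u_t⟩` of a root `d` outside the chain
monotone along the chain. -/
lemma IsChainT.mono (hT : IsSimpleT T φ) (hc : IsChainT T k x s) {d : Fin m → ℤ} (hd : d ∈ T)
    (hne : ∀ t < k, d ≠ Pi.single (x t) (s t) - Pi.single (x (t + 1)) (s (t + 1))) :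
    ∀ t ≤ k, ∀ t' ≤ t, s t' * d (x t') ≤ s t * d (x t) := by
  intro t
  induction t with
  | zero => intro _ t' h; obtain rfl : t' = 0 := by omega
            exact le_refl _
  | succ t ih =>
    intro htk t' ht'
    have h := hT.obtuse _ (hc.mem t (by omega)) d hd (hne t (by omega)).symm
    rw [IsChainT.step_dot] at h
    rcases Nat.le_succ_iff.mp ht' with h1 | h1
    · have := ih (by omega) t' h1; linarith
    · subst h1; exact le_refl _

/-- A root that pairs positively with the last unit vector `u_k` either prolongs the chain or
equals `u_{k-1} + u_k`. -/
lemma IsChainT.extend (hT : IsSimpleT T φ) (hc : IsChainT T k x s) {d : Fin m → ℤ}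
    (hd : d ∈ T)
    (hmono : ∀ t ≤ k, ∀ t' ≤ t, s t' * d (x t') ≤ s t * d (x t))
    (hpos : 0 < s k * d (x k)) :
    (∃ x' s', IsChainT T (k + 1) x' s' ∧ ∀ t ≤ k, x' t = x t ∧ s' t = s t) ∨
    (1 ≤ k ∧ d = Pi.single (x (k - 1)) (s (k - 1)) + Pi.single (x k) (s k)) := by
  -- the coordinate `x k` may be taken as the first of the two coordinates of `d`
  obtain ⟨j, q, hij, hq, hde⟩ : ∃ j q, x k ≠ j ∧ (q = 1 ∨ q = -1) ∧
      d = Pi.single (x k) (s k) + Pi.single j q := by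
    obtain ⟨i, j, p, q, hij, hp, hq, rfl⟩ := hT.t2 d hd
    have hs := hc.sign k le_rfl
    by_cases h1 : x k = i
    · refine ⟨j, q, h1 ▸ hij, hq, ?_⟩
      subst h1
      have : p = s k := by
        simp [hij] at hpos
        rcases hp with rfl | rfl <;> rcases hs with h | h <;> simp_all
      rw [this]
    · by_cases h2 : x k = j
      · refine ⟨i, p, h1, hp, ?_⟩
        subst h2
        have : q = s k := by
          simp [h1] at hpos
          rcases hq with rfl | rfl <;> rcases hs with h | h <;> simp_all
        rw [this, add_comm]
      · simp [h1, h2] at hpos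
  have hzero : ∀ l, l ≠ x k → l ≠ j → d l = 0 := by
    intro l h1 h2; simp [hde, h1, h2]
  have hdj : d j = q := by simp [hde, hij.symm]
  by_cases hex : ∃ t ≤ k, x t = j
  · obtain ⟨t, htk, rfl⟩ := hex
    have htk' : t < k := lt_of_le_of_ne htk (by rintro rfl; exact hij rfl)
    have hs := hc.sign t htk
    by_cases hsq : q = s t
    · right
      refine ⟨by omega, ?_⟩
      have : t = k - 1 := by
        by_contra hne
        have h1 := hmono (t + 1) (by omega) t (by omega)
        rw [hdj, hsq, hzero (x (t + 1))
          (fun h => by have := hc.inj _ (by omega) _ le_rfl h; omega)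
          (fun h => by have := hc.inj _ (by omega) _ htk h; omega)] at h1
        rcases hs with h | h <;> simp [h] at h1
      subst this
      rw [hde, hsq, add_comm]
    · exfalso
      have hsq : q = - s t := by
        rcases hq with rfl | rfl <;> rcases hs with h | h <;> simp_all
      have ht0 : t = 0 := by
        by_contra hne
        have h1 := hmono t htk 0 (by omega)
        rw [hdj, hsq, hzero (x 0)
          (fun h => by have := hc.inj _ (by omega) _ le_rfl h; omega)
          (fun h => by have := hc.inj _ (by omega) _ htk h; omega)] at h1
        rcases hs with h | h <;> simp [h] at h1
      have h1 := hT.pos d hd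
      have h2 := hc.phi_anti hT k le_rfl t htk'
      simp only [hde, Pi.add_apply, Int.cast_add, mul_add, Finset.sum_add_distrib,
        phi_single, hsq] at h1
      push_cast at h1
      linarith
  · left
    push Not at hex
    refine ⟨Function.update x (k + 1) j, Function.update s (k + 1) (-q), ⟨?_, ?_, ?_⟩, ?_⟩
    · intro t ht
      by_cases h : t = k + 1
      · subst h; rcases hq with rfl | rfl <;> simp
      · simpa [h] using hc.sign t (by omega)
    · intro t ht t' ht' he
      by_cases h : t = k + 1 <;> by_cases h' : t' = k + 1
      · omega
      · subst h
        rw [Function.update_self, Function.update_of_ne h'] at he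
        exact absurd he.symm (hex t' (by omega))
      · subst h'
        rw [Function.update_self, Function.update_of_ne h] at he
        exact absurd he (hex t (by omega))
      · rw [Function.update_of_ne h, Function.update_of_ne h'] at he
        exact hc.inj t (by omega) t' (by omega) he
    · intro t ht
      by_cases h : t = k
      · subst h
        have e : t ≠ t + 1 := by omega
        rw [Function.update_of_ne e, Function.update_of_ne e, Function.update_self,
          Function.update_self, Pi.single_neg, sub_neg_eq_add, ← hde]
        exact hd
      · have e : t ≠ k + 1 := by omega
        have e' : t + 1 ≠ k + 1 := by omega
        rw [Function.update_of_ne e, Function.update_of_ne e, Function.update_of_ne e',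
          Function.update_of_ne e']
        exact hc.mem t (by omega)
    · intro t ht
      have e : t ≠ k + 1 := by omega
      simp [e]

/-- Reading a chain backwards with all signs changed gives a chain with the same roots. -/
lemma IsChainT.reverse (hc : IsChainT T k x s) :
    IsChainT T k (fun t => x (k - t)) (fun t => - s (k - t)) := by
  refine ⟨fun t _ => ?_, fun t ht t' ht' h => ?_, fun t ht => ?_⟩
  · rcases hc.sign (k - t) (by omega) with h | h <;> simp [h]
  · have := hc.inj _ (by omega) _ (by omega) h; omega
  · have := hc.mem (k - (t + 1)) (by omega)
    have e : k - (t + 1) + 1 = k - t := by omega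
    rw [e] at this
    convert this using 1
    simp only [Pi.single_neg]; abel

lemma IsChainT.lt (hc : IsChainT T k x s) : k < m := by
  have := Finset.card_le_card_of_injOn (s := Finset.range (k + 1)) (t := Finset.univ) x
    (by simp) (by
      intro a ha b hb h
      simp at ha hb
      exact hc.inj a (by omega) b (by omega) h)
  simp at this
  omega

/-- The root `u_{k-1} + u_k` is conjugate to the last root `u_{k-1} - u_k` of the chain. -/
lemma IsChainT.conj_last (hc : IsChainT T k x s) (hk : 1 ≤ k) :
    ConjT (Pi.single (x (k - 1)) (s (k - 1)) - Pi.single (x k) (s k))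
      (Pi.single (x (k - 1)) (s (k - 1)) + Pi.single (x k) (s k)) := by
  have hne : x (k - 1) ≠ x k := fun h => by
    have := hc.inj _ (by omega) _ (by omega) h; omega
  refine ⟨x (k - 1), x k, hne, ?_, ?_, ?_, ?_, ?_⟩
  · rcases hc.sign (k - 1) (by omega) with h | h <;> simp [hne, h]
  · rcases hc.sign k (by omega) with h | h <;> simp [hne.symm, h]
  · simp [hne]
  · simp [hne.symm]
  · intro l h1 h2; simp [h1, h2]

/-- Without conjugate pairs, a chain of positive length either exhausts `T` or can be
prolonged. -/
lemma stepA (hT : IsSimpleT T φ) (hno : ¬ ∃ a ∈ T, ∃ b ∈ T, ConjT a b)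
    (hc : IsChainT T k x s) (hk : 1 ≤ k) :
    (∀ a ∈ T, ∃ t < k, a = Pi.single (x t) (s t) - Pi.single (x (t + 1)) (s (t + 1))) ∨
    ∃ x' s', IsChainT T (k + 1) x' s' := by
  classical
  by_contra! hcon
  obtain ⟨⟨c, hcT, hcne⟩, hnext⟩ := hcon
  have key := mt (hT.conn (T.filter fun a => ∃ t < k,
    a = Pi.single (x t) (s t) - Pi.single (x (t + 1)) (s (t + 1))) (filter_subset _ _)
    ⟨_, mem_filter.mpr ⟨hc.mem 0 hk, 0, hk, rfl⟩⟩)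
    (fun h => by
      have := h ▸ hcT
      obtain ⟨t, ht, e⟩ := (mem_filter.mp this).2
      exact hcne t ht e)
  push Not at key
  obtain ⟨a, ha, d, hd, hdS, hne0⟩ := key
  obtain ⟨t, ht, rfl⟩ := (mem_filter.mp ha).2
  have hdne : ∀ t < k, d ≠ Pi.single (x t) (s t) - Pi.single (x (t + 1)) (s (t + 1)) :=
    fun t ht e => hdS (mem_filter.mpr ⟨hd, t, ht, e⟩)
  have hmono := hc.mono hT hd hdne
  rw [IsChainT.step_dot] at hne0
  -- a root pairing positively with the end of a chain yields a contradiction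
  have main : ∀ x s, IsChainT T k x s →
      (∀ t ≤ k, ∀ t' ≤ t, s t' * d (x t') ≤ s t * d (x t)) → ¬ 0 < s k * d (x k) := by
    intro x s hc hmono hpos
    rcases hc.extend hT hd hmono hpos with ⟨x', s', h, -⟩ | ⟨-, h⟩
    · exact hnext x' s' h
    · have h1 := hc.mem (k - 1) (by omega)
      rw [Nat.sub_add_cancel hk] at h1
      exact hno ⟨_, h1, d, hd, h ▸ hc.conj_last hk⟩
  have h1 := main x s hc hmono
  have h2 := main _ _ hc.reverse (by
    intro t ht t' ht'
    have := hmono (k - t') (by omega) (k - t) (by omega)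
    linarith)
  simp only [Nat.sub_self, neg_mul] at h2
  have h3 := hmono t (by omega) 0 (by omega)
  have h4 := hmono k le_rfl (t + 1) (by omega)
  have h5 := hmono (t + 1) (by omega) t (by omega)
  omega

/-- A chain starting with a conjugate pair `u_0 - u_1`, `-u_0 - u_1` either exhausts `T`
(together with `-u_0 - u_1`) or can be prolonged at its end. -/
lemma stepD (hT : IsSimpleT T φ) (hc : IsChainT T k x s) (hk : 1 ≤ k)
    (hb : (-Pi.single (x 0) (s 0) - Pi.single (x 1) (s 1) : Fin m → ℤ) ∈ T) :
    (∀ a ∈ T, a = -Pi.single (x 0) (s 0) - Pi.single (x 1) (s 1) ∨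
      ∃ t < k, a = Pi.single (x t) (s t) - Pi.single (x (t + 1)) (s (t + 1))) ∨
    ∃ x' s', IsChainT T (k + 1) x' s' ∧
      (-Pi.single (x' 0) (s' 0) - Pi.single (x' 1) (s' 1) : Fin m → ℤ) ∈ T := by
  classical
  by_contra! hcon
  obtain ⟨⟨c, hcT, hcb, hcne⟩, hnext⟩ := hcon
  have key := mt (hT.conn (T.filter fun a => a = -Pi.single (x 0) (s 0) - Pi.single (x 1) (s 1) ∨
      ∃ t < k, a = Pi.single (x t) (s t) - Pi.single (x (t + 1)) (s (t + 1)))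
    (filter_subset _ _) ⟨_, mem_filter.mpr ⟨hb, Or.inl rfl⟩⟩)
    (fun h => by
      have := h ▸ hcT
      rcases (mem_filter.mp this).2 with e | ⟨t, ht, e⟩
      · exact hcb e
      · exact hcne t ht e)
  push Not at key
  obtain ⟨a, ha, d, hd, hdS, hne0⟩ := key
  have hdne : ∀ t < k, d ≠ Pi.single (x t) (s t) - Pi.single (x (t + 1)) (s (t + 1)) :=
    fun t ht e => hdS (mem_filter.mpr ⟨hd, Or.inr ⟨t, ht, e⟩⟩)
  have hdb : (-Pi.single (x 0) (s 0) - Pi.single (x 1) (s 1) : Fin m → ℤ) ⬝ᵥ d ≤ 0 :=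
    hT.obtuse _ hb d hd (fun e => hdS (mem_filter.mpr ⟨hd, Or.inl e.symm⟩))
  have hbd : (-Pi.single (x 0) (s 0) - Pi.single (x 1) (s 1) : Fin m → ℤ) ⬝ᵥ d =
      - (s 0 * d (x 0)) - s 1 * d (x 1) := by
    simp [sub_dotProduct]
  have hmono := hc.mono hT hd hdne
  have h10 := hmono 1 hk 0 (by omega)
  have hk1 := hmono k le_rfl 1 hk
  have hpos : 0 < s k * d (x k) := by
    rcases (mem_filter.mp ha).2 with rfl | ⟨t, ht, rfl⟩
    · omega
    · rw [IsChainT.step_dot] at hne0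
      have h5 := hmono (t + 1) (by omega) t (by omega)
      have h4 := hmono k le_rfl (t + 1) (by omega)
      have h6 := hmono t (by omega) 0 (by omega)
      rcases Nat.eq_zero_or_pos t with rfl | h
      · simp only [zero_add] at *; omega
      · have h7 := hmono t (by omega) 1 (by omega)
        omega
  rcases hc.extend hT hd hmono hpos with ⟨x', s', h, hag⟩ | ⟨-, h⟩
  · refine hnext x' s' h ?_
    rw [(hag 0 (by omega)).1, (hag 0 (by omega)).2, (hag 1 hk).1, (hag 1 hk).2]
    exact hb
  · -- `φ(u_0) + φ(u_1) < 0` and `φ` decreases along the chain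
    have p1 := hT.pos d hd
    have p2 := hT.pos _ hb
    have e : ∀ l, φ l * (((-Pi.single (x 0) (s 0) - Pi.single (x 1) (s 1) :
        Fin m → ℤ) l : ℤ) : ℚ) = - (φ l * ((Pi.single (x 0) (s 0) : Fin m → ℤ) l : ℚ)) -
        φ l * ((Pi.single (x 1) (s 1) : Fin m → ℤ) l : ℚ) := by
      intro l; rw [Pi.sub_apply, Pi.neg_apply]; push_cast; ring
    simp only [e, Finset.sum_sub_distrib, Finset.sum_neg_distrib, phi_single] at p2
    simp only [h, Pi.add_apply, Int.cast_add, mul_add, Finset.sum_add_distrib,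
        phi_single] at p1
    have q1 : φ (x k) * s k ≤ φ (x 1) * s 1 := by
      rcases Nat.eq_or_lt_of_le hk with rfl | h
      · exact le_rfl
      · exact (hc.phi_anti hT k le_rfl 1 h).le
    have q2 : φ (x (k - 1)) * s (k - 1) ≤ φ (x 0) * s 0 := by
      rcases Nat.eq_zero_or_pos (k - 1) with h | h
      · rw [h]
      · exact (hc.phi_anti hT (k - 1) (by omega) 0 h).le
    linarith

/-- Inner products of the roots of a chain. -/
lemma IsChainT.gram (hc : IsChainT T k x s) {t t' : ℕ} (ht : t < k) (ht' : t' < k) :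
    (Pi.single (x t) (s t) - Pi.single (x (t + 1)) (s (t + 1)) : Fin m → ℤ) ⬝ᵥ
      (Pi.single (x t') (s t') - Pi.single (x (t' + 1)) (s (t' + 1))) =
    if t = t' then 2 else if t + 1 = t' ∨ t' + 1 = t then -1 else 0 := by
  have hu : ∀ a ≤ k, ∀ b ≤ k, s a * (Pi.single (x b) (s b) : Fin m → ℤ) (x a) =
      if a = b then 1 else 0 := by
    intro a ha b hb
    by_cases h : a = b
    · subst h
      rcases hc.sign a ha with h | h <;> simp [h]
    · have : x a ≠ x b := fun e => h (hc.inj a ha b hb e)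
      simp [h, this]
  rw [IsChainT.step_dot]
  simp only [Pi.sub_apply, mul_sub]
  rw [hu t (by omega) t' (by omega), hu t (by omega) (t' + 1) (by omega),
    hu (t + 1) (by omega) t' (by omega), hu (t + 1) (by omega) (t' + 1) (by omega)]
  split_ifs <;> omega

/-- Inner products of the roots of a chain with `-u_0 - u_1`. -/
lemma IsChainT.gram_fork (hc : IsChainT T k x s) {t : ℕ} (ht : t < k) :
    (Pi.single (x t) (s t) - Pi.single (x (t + 1)) (s (t + 1)) : Fin m → ℤ) ⬝ᵥ
      (-Pi.single (x 0) (s 0) - Pi.single (x 1) (s 1)) =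
    if t = 1 then -1 else 0 := by
  have hu : ∀ a ≤ k, ∀ b ≤ k, s a * (Pi.single (x b) (s b) : Fin m → ℤ) (x a) =
      if a = b then 1 else 0 := by
    intro a ha b hb
    by_cases h : a = b
    · subst h
      rcases hc.sign a ha with h | h <;> simp [h]
    · have : x a ≠ x b := fun e => h (hc.inj a ha b hb e)
      simp [h, this]
  rw [IsChainT.step_dot]
  simp only [Pi.sub_apply, Pi.neg_apply, mul_sub, mul_neg]
  rw [hu t (by omega) 0 (by omega), hu t (by omega) 1 (by omega),
    hu (t + 1) (by omega) 0 (by omega), hu (t + 1) (by omega) 1 (by omega),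
    if_neg (show ¬ t + 1 = 0 by omega)]
  split_ifs <;> omega

/-- `MatchesGram` for sets of coordinate vectors, without the injectivity of the enumeration. -/
def MatchesT {m : ℕ} (T : Finset (Fin m → ℤ)) (ℓ : ℕ) (g : Fin ℓ → Fin ℓ → ℤ) : Prop :=
  ∃ e : Fin ℓ → Fin m → ℤ, (∀ i, e i ∈ T) ∧ (∀ a ∈ T, ∃ i, e i = a) ∧
    ∀ i j, e i ⬝ᵥ e j = g i j

/-- Chains have bounded length, so by `stepA` some chain exhausts `T`; its Gram matrix is that
of `A_ℓ`. -/
lemma coreA (hT : IsSimpleT T φ) (hne : T.Nonempty) (hno : ¬ ∃ a ∈ T, ∃ b ∈ T, ConjT a b) :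
    ∃ ℓ, MatchesT T ℓ (gramA ℓ) := by
  by_contra hcon
  have all : ∀ k, ∃ x s, IsChainT T (k + 1) x s := by
    intro k
    induction k with
    | zero =>
      obtain ⟨a, ha⟩ := hne
      obtain ⟨i, j, p, q, hij, hp, hq, rfl⟩ := hT.t2 a ha
      refine ⟨fun t => if t = 0 then i else j, fun t => if t = 0 then p else -q, ?_, ?_, ?_⟩
      · intro t _
        by_cases h : t = 0
        · simpa [h] using hp
        · rcases hq with rfl | rfl <;> simp [h]
      · intro t ht t' ht' h
        interval_cases t <;> interval_cases t' <;> simp_all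
      · intro t ht
        obtain rfl : t = 0 := by omega
        simpa [Pi.single_neg] using ha
    | succ k ih =>
      obtain ⟨x, s, hc⟩ := ih
      rcases stepA hT hno hc (by omega) with h | h
      · refine absurd ⟨k + 1, fun i => Pi.single (x i) (s i) -
          Pi.single (x (i + 1)) (s (i + 1)), fun i => hc.mem i i.2, ?_, ?_⟩ hcon
        · intro a ha
          obtain ⟨t, ht, rfl⟩ := h a ha
          exact ⟨⟨t, ht⟩, rfl⟩
        · intro i j
          rw [hc.gram i.2 j.2]
          simp only [gramA, Fin.ext_iff]
      · exact h
  obtain ⟨x, s, hc⟩ := all m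
  have := hc.lt
  omega

/-- A conjugate pair starts a chain of length one with a fork; by `stepD` it grows until it
exhausts `T`, whose Gram matrix is then that of `D_ℓ`. -/
lemma coreD (hT : IsSimpleT T φ) (hcard : 4 ≤ T.card) (hex : ∃ a ∈ T, ∃ b ∈ T, ConjT a b) :
    ∃ ℓ, 4 ≤ ℓ ∧ MatchesT T ℓ (gramD ℓ) := by
  classical
  by_contra hcon
  have all : ∀ k, ∃ x s, IsChainT T (k + 1) x s ∧
      (-Pi.single (x 0) (s 0) - Pi.single (x 1) (s 1) : Fin m → ℤ) ∈ T := by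
    intro k
    induction k with
    | zero =>
      obtain ⟨a, ha, b, hb, i, j, hij, hai, haj, hbi, hbj, h0⟩ := hex
      have ea : a = Pi.single j (a j) - Pi.single i (- a i) := by
        ext l
        by_cases h1 : l = i
        · subst h1; simp [hij]
        · by_cases h2 : l = j
          · subst h2; simp [hij.symm]
          · simp [h1, h2, (h0 l h1 h2).1]
      have eb : b = -Pi.single j (a j) - Pi.single i (- a i) := by
        ext l
        by_cases h1 : l = i
        · subst h1; simp [hij, hbi]
        · by_cases h2 : l = j
          · subst h2; simp [hij.symm, hbj]
          · simp [h1, h2, (h0 l h1 h2).2]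
      refine ⟨fun t => if t = 0 then j else i, fun t => if t = 0 then a j else - a i,
        ⟨?_, ?_, ?_⟩, ?_⟩
      · intro t _
        by_cases h : t = 0
        · simpa [h] using haj
        · rcases hai with e | e <;> simp [h, e]
      · intro t ht t' ht' h
        interval_cases t <;> interval_cases t'
        · rfl
        · exact absurd (by simpa using h) hij.symm
        · exact absurd (by simpa using h) hij
        · rfl
      · intro t ht
        obtain rfl : t = 0 := by omega
        simp only [zero_add, if_true, one_ne_zero, if_false]
        rw [← ea]; exact ha
      · simp only [if_true, one_ne_zero, if_false]
        rw [← eb]; exact hb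
    | succ k ih =>
      obtain ⟨x, s, hc, hb⟩ := ih
      rcases stepD hT hc (by omega) hb with h | h
      · -- the chain is listed backwards, so that the fork is at the end as in `gramD`
        set r : ℕ → Fin m → ℤ := fun t =>
          Pi.single (x t) (s t) - Pi.single (x (t + 1)) (s (t + 1)) with hr
        set b : Fin m → ℤ := -Pi.single (x 0) (s 0) - Pi.single (x 1) (s 1) with hbdef
        have hk : 2 ≤ k := by
          have h1 : T ⊆ insert b ((range (k + 1)).image r) := by
            intro a ha
            rcases h a ha with e | ⟨t, ht, e⟩
            · simp [e]
            · exact mem_insert_of_mem (mem_image.mpr ⟨t, mem_range.mpr ht, e.symm⟩)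
          have h2 := (card_le_card h1).trans (card_insert_le _ _)
          have h3 := card_image_le (s := range (k + 1)) (f := r)
          rw [card_range] at h3
          omega
        have hrr : ∀ t t', t < k + 1 → t' < k + 1 → r t ⬝ᵥ r t' =
            if t = t' then 2 else if t + 1 = t' ∨ t' + 1 = t then -1 else 0 :=
          fun t t' ht ht' => hc.gram ht ht'
        have hrb : ∀ t, t < k + 1 → r t ⬝ᵥ b = if t = 1 then -1 else 0 :=
          fun t ht => hc.gram_fork ht
        have hbb : b ⬝ᵥ b = 2 := by
          have hne : x 0 ≠ x 1 := fun h => by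
            have := hc.inj _ (by omega) _ (by omega) h; omega
          rcases hc.sign 0 (by omega) with e | e <;>
            rcases hc.sign 1 (by omega) with e' | e' <;>
            simp [hbdef, hne, hne.symm, e, e']
        refine absurd ⟨k + 2, by omega, fun i => if (i : ℕ) = k + 1 then b else r (k - i),
          ?_, ?_, ?_⟩ hcon
        · intro i
          by_cases hi : (i : ℕ) = k + 1
          · simpa [hi] using hb
          · simpa [hi] using hc.mem (k - i) (by omega)
        · intro a ha
          rcases h a ha with e | ⟨t, ht, e⟩
          · exact ⟨⟨k + 1, by omega⟩, by simp [e]⟩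
          · refine ⟨⟨k - t, by omega⟩, ?_⟩
            have h1 : k - t ≠ k + 1 := by omega
            have h2 : k - (k - t) = t := by omega
            simp only [h1, if_false, h2]
            exact e.symm
        · intro i j
          have hi2 := i.2
          have hj2 := j.2
          by_cases hi : (i : ℕ) = k + 1 <;> by_cases hj : (j : ℕ) = k + 1
          · simp only [hi, hj, if_true, hbb, gramD, Fin.ext_iff]
          · simp only [hi, hj, if_true, if_false, gramD, Fin.ext_iff]
            rw [dotProduct_comm, hrb _ (by omega)]
            split_ifs <;> omega
          · simp only [hi, hj, if_true, if_false, gramD, Fin.ext_iff]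
            rw [hrb _ (by omega)]
            split_ifs <;> omega
          · simp only [hi, hj, if_false, gramD, Fin.ext_iff]
            rw [hrr _ _ (by omega) (by omega)]
            split_ifs <;> omega
      · exact h
  obtain ⟨x, s, hc, -⟩ := all m
  have := hc.lt
  omega

/-- Orthogonal type 2 vectors with the same nonzero entry at `i` must share their other
coordinate as well, with opposite signs there. -/
lemma conj_of_orth {a b : Fin m → ℤ} (ha : IsT2 a) (hb : IsT2 b) (i : Fin m)
    (h0 : a i ≠ 0) (hab : b i = a i) (horth : a ⬝ᵥ b = 0) : ConjT a b := by
  -- a type 2 vector with a nonzero `i`-th entry has exactly one other nonzero entry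
  have norm : ∀ c : Fin m → ℤ, IsT2 c → c i ≠ 0 → (c i = 1 ∨ c i = -1) ∧
      ∃ j q, i ≠ j ∧ (q = 1 ∨ q = -1) ∧ c = Pi.single i (c i) + Pi.single j q := by
    rintro c ⟨r, j, p, q, hij, hp, hq, rfl⟩ hc
    by_cases h1 : i = r
    · subst h1
      exact ⟨by simpa [hij] using hp, j, q, hij, hq, by simp [hij]⟩
    · by_cases h2 : i = j
      · subst h2
        exact ⟨by simpa [h1] using hq, r, p, h1, hp, by simp [h1, add_comm]⟩
      · simp [h1, h2] at hc
  obtain ⟨ai, j, q, hij, hq, ea⟩ := norm a ha h0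
  obtain ⟨-, j', q', hij', hq', eb⟩ := norm b hb (hab ▸ h0)
  rw [hab] at eb
  rw [ea, add_dotProduct, single_dotProduct, single_dotProduct] at horth
  have hjj : j = j' := by
    by_contra hne
    have : b j = 0 := by rw [eb]; simp [hij.symm, hne]
    rw [hab, this] at horth
    simp [h0] at horth
  subst hjj
  have haj : a j = q := by rw [ea]; simp [hij.symm]
  have hbj : b j = q' := by rw [eb]; simp [hij.symm]
  refine ⟨i, j, hij, ai, haj ▸ hq, hab, ?_, ?_⟩
  · rw [haj, hbj]
    rw [hab, hbj] at horth
    rcases ai with h | h <;> rcases hq with h' | h' <;> simp [h, h'] at horth ⊢ <;> omega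
  · intro l h1 h2
    rw [ea, eb]; simp [h1, h2]

lemma IsT2.abs_le {a : Fin m → ℤ} (ha : IsT2 a) (i : Fin m) : a i = 0 ∨ a i = 1 ∨ a i = -1 := by
  obtain ⟨r, j, p, q, hij, hp, hq, rfl⟩ := ha
  by_cases h1 : i = r
  · subst h1; simp [hij]; tauto
  · by_cases h2 : i = j
    · subst h2; simp [h1]; tauto
    · simp [h1, h2]

/-- Each neighbour of the trivalent node of `D_ℓ` shares exactly one of its two coordinates,
so two of the three neighbours share the same one; being orthogonal, they are conjugate. -/
lemma conj_of_D (h2 : ∀ a ∈ T, IsT2 a) {ℓ : ℕ} (hℓ : 4 ≤ ℓ) (hm : MatchesT T ℓ (gramD ℓ)) :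
    ∃ a ∈ T, ∃ b ∈ T, ConjT a b := by
  obtain ⟨e, heT, -, hg⟩ := hm
  set c := e ⟨ℓ - 3, by omega⟩ with hc
  set L₁ := e ⟨ℓ - 4, by omega⟩ with hL1
  set L₂ := e ⟨ℓ - 2, by omega⟩ with hL2
  set L₃ := e ⟨ℓ - 1, by omega⟩ with hL3
  have c1 : c ⬝ᵥ L₁ = -1 := by
    rw [hc, hL1, hg]; simp only [gramD, Fin.ext_iff]; split_ifs <;> omega
  have c2 : c ⬝ᵥ L₂ = -1 := by
    rw [hc, hL2, hg]; simp only [gramD, Fin.ext_iff]; split_ifs <;> omega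
  have c3 : c ⬝ᵥ L₃ = -1 := by
    rw [hc, hL3, hg]; simp only [gramD, Fin.ext_iff]; split_ifs <;> first | omega | simp_all
  have o12 : L₁ ⬝ᵥ L₂ = 0 := by
    rw [hL1, hL2, hg]; simp only [gramD, Fin.ext_iff]; split_ifs <;> omega
  have o13 : L₁ ⬝ᵥ L₃ = 0 := by
    rw [hL1, hL3, hg]; simp only [gramD, Fin.ext_iff]; split_ifs <;> omega
  have o23 : L₂ ⬝ᵥ L₃ = 0 := by
    rw [hL2, hL3, hg]; simp only [gramD, Fin.ext_iff]; split_ifs <;> omega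
  obtain ⟨i, j, p, q, hij, hp, hq, ec⟩ := h2 c (heT _)
  have half : ∀ L ∈ T, c ⬝ᵥ L = -1 → L i = -p ∨ L j = -q := by
    intro L hL h
    rw [ec, add_dotProduct, single_dotProduct, single_dotProduct] at h
    rcases (h2 L hL).abs_le i with h1 | h1 | h1 <;> rcases (h2 L hL).abs_le j with h3 | h3 | h3 <;>
      rcases hp with rfl | rfl <;> rcases hq with rfl | rfl <;> simp_all
  have fin : ∀ L ∈ T, ∀ M ∈ T, L ⬝ᵥ M = 0 → ∀ l r, (r = 1 ∨ r = -1) → L l = -r → M l = -r →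
      ∃ a ∈ T, ∃ b ∈ T, ConjT a b := by
    intro L hL M hM ho l r hr h1 h3
    refine ⟨L, hL, M, hM, conj_of_orth (h2 L hL) (h2 M hM) l ?_ (h3.trans h1.symm) ho⟩
    rcases hr with rfl | rfl <;> simp [h1]
  rcases half L₁ (heT _) c1 with h1 | h1 <;> rcases half L₂ (heT _) c2 with h2' | h2' <;>
    rcases half L₃ (heT _) c3 with h3 | h3
  · exact fin _ (heT _) _ (heT _) o12 i p hp h1 h2'
  · exact fin _ (heT _) _ (heT _) o12 i p hp h1 h2'
  · exact fin _ (heT _) _ (heT _) o13 i p hp h1 h3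
  · exact fin _ (heT _) _ (heT _) o23 j q hq h2' h3
  · exact fin _ (heT _) _ (heT _) o23 i p hp h2' h3
  · exact fin _ (heT _) _ (heT _) o13 j q hq h1 h3
  · exact fin _ (heT _) _ (heT _) o12 j q hq h1 h2'
  · exact fin _ (heT _) _ (heT _) o12 j q hq h1 h2'

end Core

/-! ### Passage from `Φ` and `Δ` to coordinate vectors -/

/-- The coordinate map `a ↦ (⟨a, v_i⟩)_i` from `N*` to `ℤ^m`. -/
def coordV {n m : ℕ} (v : Fin m → Fin n → ℤ) : (Fin n → ℤ) →ₗ[ℤ] (Fin m → ℤ) where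
  toFun a i := pairZ a (v i)
  map_add' a b := by ext i; simp [pairZ, add_mul, Finset.sum_add_distrib]
  map_smul' c a := by ext i; simp [pairZ, Finset.mul_sum, mul_assoc]

lemma formV_eq {n m : ℕ} (v : Fin m → Fin n → ℤ) (a b : Fin n → ℤ) :
    formV v a b = coordV v a ⬝ᵥ coordV v b := rfl

section Transfer

variable {n m : ℕ} {v : Fin m → Fin n → ℤ} {Φ : Set (Fin n → ℤ)} {Δ : Finset (Fin n → ℤ)}

lemma IsType2.isT2 {a : Fin n → ℤ} (h : IsType2 v a) : IsT2 (coordV v a) := by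
  obtain ⟨i, j, hij, hi, hj, h0⟩ := h
  refine ⟨i, j, _, _, hij, hi, hj, ?_⟩
  ext l
  by_cases h1 : l = i
  · subst h1; simp [hij, coordV]
  · by_cases h2 : l = j
    · subst h2; simp [hij.symm, coordV]
    · simp [h1, h2, h0 l h1 h2, coordV]

/-- As `V` spans a lattice of full rank, the standard basis vectors are rational combinations
of the `v_i`. -/
lemma exists_coeff (hv : Module.finrank ℤ (Submodule.span ℤ (Set.range v)) = n) :
    ∃ c : Fin n → Fin m → ℚ, ∀ j l, ∑ i, c j i * (v i l : ℚ) = if j = l then 1 else 0 := by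
  have h := Submodule.finrank_quotient_add_finrank (Submodule.span ℤ (Set.range v))
  rw [hv, Module.finrank_fin_fun, Nat.add_eq_right, Module.finrank_eq_zero_iff] at h
  have key : ∀ j : Fin n, ∃ c : Fin m → ℚ,
      ∀ l, ∑ i, c i * (v i l : ℚ) = if j = l then 1 else 0 := by
    intro j
    obtain ⟨N, hN, hm⟩ := h (Submodule.Quotient.mk (Pi.single j 1))
    rw [← Submodule.Quotient.mk_smul, Submodule.Quotient.mk_eq_zero,
      Submodule.mem_span_range_iff_exists_fun] at hm
    obtain ⟨c, hc⟩ := hm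
    have hNq : (N : ℚ) ≠ 0 := by exact_mod_cast hN
    refine ⟨fun i => (c i : ℚ) / N, fun l => ?_⟩
    have h1 := congrFun hc l
    simp only [Finset.sum_apply, Pi.smul_apply, smul_eq_mul] at h1
    have h2 : (∑ i, (c i : ℚ) * v i l) = N * (Pi.single j 1 : Fin n → ℤ) l := by
      exact_mod_cast h1
    have h3 : ∑ i, (c i : ℚ) / N * v i l = (∑ i, (c i : ℚ) * v i l) / N := by
      rw [Finset.sum_div]; exact Finset.sum_congr rfl fun i _ => by ring
    rw [h3, h2]
    by_cases hjl : j = l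
    · subst hjl; simp [hNq]
    · simp [hjl, Ne.symm hjl]
  choose c hc using key
  exact ⟨c, hc⟩

/-- If `∑ c_i v_i = w`, then the functional `c` on coordinate vectors evaluates `a` at `w`. -/
lemma sum_coordV (c : Fin m → ℚ) (w : Fin n → ℚ)
    (hc : ∀ l, ∑ i, c i * (v i l : ℚ) = w l) (a : Fin n → ℤ) :
    ∑ i, c i * (coordV v a i : ℚ) = ∑ l, (a l : ℚ) * w l := by
  simp only [coordV, LinearMap.coe_mk, AddHom.coe_mk, pairZ, Int.cast_sum, Int.cast_mul,
    ← hc, Finset.mul_sum]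
  rw [Finset.sum_comm]
  exact Finset.sum_congr rfl fun l _ => Finset.sum_congr rfl fun i _ => by ring

lemma coordV_injective (hv : Module.finrank ℤ (Submodule.span ℤ (Set.range v)) = n) :
    Function.Injective (coordV v) := by
  obtain ⟨c, hc⟩ := exists_coeff hv
  rw [injective_iff_map_eq_zero]
  intro a ha
  ext j
  have h := sum_coordV (c j) (fun l => if j = l then 1 else 0) (hc j) a
  rw [ha] at h
  simpa using h.symm

/-- By linear independence of `Δ` there is a rational functional with prescribed values on
the simple roots. -/
lemma IsBase.exists_functional (hb : IsBase v Φ Δ) (w : (Fin n → ℤ) → ℚ) :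
    ∃ y : Fin n → ℚ, ∀ a ∈ Δ, ∑ j, (a j : ℚ) * y j = w a := by
  obtain ⟨-, hli, -⟩ := hb
  obtain ⟨f, hf⟩ : ∃ f : (Fin n → ℚ) →ₗ[ℚ] ℚ, ∀ a : Δ,
      f (fun j => ((a : Fin n → ℤ) j : ℚ)) = w a := by
    obtain ⟨f, hf⟩ := LinearMap.exists_extend
      ((Finsupp.linearCombination ℚ fun a : Δ => w a) ∘ₗ hli.repr)
    refine ⟨f, fun a => ?_⟩
    have h1 : f (fun j => ((a : Fin n → ℤ) j : ℚ)) = _ :=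
      LinearMap.congr_fun hf ⟨_, Submodule.subset_span ⟨a, rfl⟩⟩
    rw [LinearMap.comp_apply] at h1
    rw [h1, hli.repr_eq_single a _ rfl]
    simp
  refine ⟨fun j => f (Pi.single j 1), fun a ha => ?_⟩
  rw [← hf ⟨a, ha⟩, LinearMap.pi_apply_eq_sum_univ f]
  refine Finset.sum_congr rfl fun j _ => ?_
  have e : (fun l => if j = l then (1 : ℚ) else 0) = Pi.single j 1 := by
    ext l; simp [Pi.single_apply, eq_comm]
  rw [smul_eq_mul, e]

/-- Two type 2 vectors have inner product at most `2`, and it equals `2` only if they agree. -/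
lemma IsT2.dot_cases {a b : Fin m → ℤ} (ha : IsT2 a) (hb : IsT2 b) (hab : a ≠ b) :
    a ⬝ᵥ b ≤ 1 := by
  obtain ⟨i, j, p, q, hij, hp, hq, rfl⟩ := ha
  rw [add_dotProduct, single_dotProduct, single_dotProduct]
  by_contra hcon
  refine hab ?_
  have h1 : b i = p ∧ b j = q := by
    rcases hb.abs_le i with h | h | h <;> rcases hb.abs_le j with h' | h' | h' <;>
      rcases hp with rfl | rfl <;> rcases hq with rfl | rfl <;> simp_all
  have hbi : b i ≠ 0 := by rcases hp with h | h <;> omega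
  have hbj : b j ≠ 0 := by rcases hq with h | h <;> omega
  obtain ⟨i', j', p', q', hij', -, -, hbe⟩ := hb
  have h2 : ∀ l, l ≠ i → l ≠ j → b l = 0 := by
    intro l hl hl'
    by_contra hbl
    have h3 : ∀ r, b r ≠ 0 → r = i' ∨ r = j' := by
      intro r hr
      by_contra! h
      exact hr (by simp [hbe, h.1, h.2])
    rcases h3 i hbi with e | e <;> rcases h3 j hbj with e' | e' <;>
      rcases h3 l hbl with e'' | e'' <;> simp_all
  ext l
  by_cases e : l = i
  · subst e; simp [hij, h1.1]
  · by_cases e' : l = j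
    · subst e'; simp [hij.symm, h1.2]
    · simp [e, e', h2 l e e']

lemma IsT2.dot_self {a : Fin m → ℤ} (ha : IsT2 a) : a ⬝ᵥ a = 2 := by
  obtain ⟨i, j, p, q, hij, hp, hq, rfl⟩ := ha
  rw [add_dotProduct, single_dotProduct, single_dotProduct]
  rcases hp with rfl | rfl <;> rcases hq with rfl | rfl <;> simp [hij, hij.symm]

/-- Distinct simple roots form an obtuse angle: otherwise their difference would be a root
with coefficients of both signs. -/
lemma obtuse_of_base (hsub : IsRootSubsystem v (RV v) Φ) (hbase : IsBase v Φ Δ)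
    (hlong : ∀ a ∈ Δ, IsType2 v a)
    (hinj : Function.Injective (coordV v)) {a b : Fin n → ℤ} (ha : a ∈ Δ) (hb : b ∈ Δ)
    (hab : a ≠ b) : coordV v a ⬝ᵥ coordV v b ≤ 0 := by
  classical
  by_contra hcon
  have h1 := (hlong a ha).isT2.dot_cases (hlong b hb).isT2 (hinj.ne hab)
  have h2 : coordV v b ⬝ᵥ coordV v a = 1 := by rw [dotProduct_comm]; omega
  have h3 := hsub.2 a (hbase.1 ha) b (hbase.1 hb)
  rw [formV_eq, formV_eq, h2, (hlong a ha).isT2.dot_self] at h3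
  norm_num at h3
  have hf : ∀ r ∈ Δ, ∀ c : (Fin n → ℤ) → ℕ, ∀ y : Fin n → ℚ,
      (∀ x ∈ Δ, ∑ j, (x j : ℚ) * y j = if x = r then 1 else 0) →
      ∑ j, ((∑ x ∈ Δ, (c x : ℤ) • x) j : ℚ) * y j = c r := by
    intro r hr c y hy
    have : ∀ j, ((∑ x ∈ Δ, (c x : ℤ) • x) j : ℚ) * y j =
        ∑ x ∈ Δ, (c x : ℚ) * ((x j : ℚ) * y j) := by
      intro j
      simp only [Finset.sum_apply, Pi.smul_apply, smul_eq_mul, Int.cast_sum, Finset.sum_mul]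
      exact Finset.sum_congr rfl fun x _ => by push_cast; ring
    simp only [this]
    rw [Finset.sum_comm]
    simp only [← Finset.mul_sum]
    rw [Finset.sum_congr rfl fun x hx => by rw [hy x hx]]
    simp [hr]
  have hba : ∀ y : Fin n → ℚ, ∑ j, ((b - a) j : ℚ) * y j =
      ∑ j, (b j : ℚ) * y j - ∑ j, (a j : ℚ) * y j := by
    intro y
    rw [← Finset.sum_sub_distrib]
    exact Finset.sum_congr rfl fun j _ => by rw [Pi.sub_apply]; push_cast; ring
  rcases hbase.2.2 _ h3 with ⟨c, hc⟩ | ⟨c, hc⟩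
  · obtain ⟨y, hy⟩ := hbase.exists_functional fun x => if x = a then 1 else 0
    have h4 := hf a ha c y hy
    rw [← hc, hba, hy a ha, hy b hb, if_pos rfl, if_neg hab.symm] at h4
    have : (0 : ℚ) ≤ c a := Nat.cast_nonneg _
    linarith
  · obtain ⟨y, hy⟩ := hbase.exists_functional fun x => if x = b then 1 else 0
    have h4 := hf b hb c y hy
    rw [show ∑ x ∈ Δ, (c x : ℤ) • x = a - b by rw [← neg_sub, hc, neg_neg]] at h4
    have h5 := hba y
    rw [hy a ha, hy b hb, if_pos rfl, if_neg hab] at h5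
    have h6 : ∑ j, ((a - b) j : ℚ) * y j = - ∑ j, ((b - a) j : ℚ) * y j := by
      rw [← Finset.sum_neg_distrib]
      exact Finset.sum_congr rfl fun j _ => by simp only [Pi.sub_apply]; push_cast; ring
    have : (0 : ℚ) ≤ c b := Nat.cast_nonneg _
    linarith

/-- The simple roots are connected. Given an orthogonal decomposition of `Δ`, a root is a sum
of orthogonal vectors in the spans of the two parts; these have even square length as all
simple roots have square length 2, while the root has square length at most 2, so one of them
vanishes and the roots decompose as well. -/
lemma conn_of_irred (hsub : IsRootSubsystem v (RV v) Φ) (hbase : IsBase v Φ Δ)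
    (hirr : IsIrred v Φ) (hlong : ∀ a ∈ Δ, IsType2 v a)
    (hinj : Function.Injective (coordV v)) {S : Finset (Fin n → ℤ)} (hS : S ⊆ Δ)
    (hne : S.Nonempty) (horth : ∀ a ∈ S, ∀ b ∈ Δ, b ∉ S → coordV v a ⬝ᵥ coordV v b = 0) :
    S = Δ := by
  classical
  set A := Submodule.span ℤ (S : Set (Fin n → ℤ)) with hA
  set B := Submodule.span ℤ ((Δ \ S : Finset (Fin n → ℤ)) : Set (Fin n → ℤ)) with hB
  have hAB : ∀ y ∈ A, ∀ z ∈ B, coordV v y ⬝ᵥ coordV v z = 0 := by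
    intro y hy z hz
    induction hy using Submodule.span_induction with
    | zero => simp
    | add y y' _ _ h h' => simp [add_dotProduct, h, h']
    | smul c y _ h => rw [map_smul, smul_dotProduct, h, smul_zero]
    | mem y hy =>
      induction hz using Submodule.span_induction with
      | zero => simp
      | add y y' _ _ h h' => simp [dotProduct_add, h, h']
      | smul c y _ h => rw [map_smul, dotProduct_smul, h, smul_zero]
      | mem z hz =>
        rw [mem_coe, mem_sdiff] at hz
        exact horth y hy z hz.1 hz.2
  have heven : ∀ D ⊆ Δ, ∀ y ∈ Submodule.span ℤ (D : Set (Fin n → ℤ)),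
      (2 : ℤ) ∣ coordV v y ⬝ᵥ coordV v y := by
    intro D hD y hy
    induction hy using Submodule.span_induction with
    | zero => simp
    | add y y' _ _ h h' =>
      simp only [map_add, add_dotProduct, dotProduct_add]
      rw [dotProduct_comm (coordV v y') (coordV v y)]
      omega
    | smul c y _ h =>
      rw [map_smul, smul_dotProduct, dotProduct_smul]
      exact Dvd.dvd.mul_left (Dvd.dvd.mul_left h c) c
    | mem y hy => rw [(hlong y (hD hy)).isT2.dot_self]
  have hpos : ∀ y, y ≠ 0 → 0 < coordV v y ⬝ᵥ coordV v y := by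
    intro y hy
    refine lt_of_le_of_ne (Finset.sum_nonneg fun i _ => mul_self_nonneg _) fun h => hy ?_
    exact hinj (by rw [dotProduct_self_eq_zero.mp h.symm, map_zero])
  have hnorm : ∀ x ∈ Φ, coordV v x ⬝ᵥ coordV v x ≤ 2 := by
    intro x hx
    rcases hsub.1 hx with ⟨i, hi, h0⟩ | h
    · have e : coordV v x = Pi.single i (pairZ x (v i)) := by
        ext l
        by_cases h : l = i
        · subst h; simp [coordV]
        · simp [h, coordV, h0 l h]
      rw [e]
      rcases hi with h | h <;> simp [h]
    · exact h.isT2.dot_self.le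
  have hsplit : ∀ c : (Fin n → ℤ) → ℕ, ∃ y ∈ A, ∃ z ∈ B, ∑ a ∈ Δ, (c a : ℤ) • a = y + z := by
    intro c
    refine ⟨∑ a ∈ S, (c a : ℤ) • a, Submodule.sum_mem _ fun a ha =>
      Submodule.smul_mem _ _ (Submodule.subset_span ha), ∑ a ∈ Δ \ S, (c a : ℤ) • a,
      Submodule.sum_mem _ fun a ha => Submodule.smul_mem _ _ (Submodule.subset_span ha), ?_⟩
    rw [add_comm, Finset.sum_sdiff hS]
  have hcover : Φ = (Φ ∩ A) ∪ (Φ ∩ B) := by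
    rw [← Set.inter_union_distrib_left]
    refine (Set.inter_eq_left.mpr fun x hx => ?_).symm
    obtain ⟨y, hy, z, hz, e⟩ : ∃ y ∈ A, ∃ z ∈ B, x = y + z := by
      rcases hbase.2.2 x hx with ⟨c, rfl⟩ | ⟨c, rfl⟩
      · exact hsplit c
      · obtain ⟨y, hy, z, hz, e⟩ := hsplit c
        exact ⟨-y, A.neg_mem hy, -z, B.neg_mem hz, by rw [e, neg_add]⟩
    by_cases hy0 : y = 0
    · right; rw [e, hy0, zero_add]; exact hz
    by_cases hz0 : z = 0
    · left; rw [e, hz0, add_zero]; exact hy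
    exfalso
    have h1 := hnorm x hx
    rw [e] at h1
    simp only [map_add, add_dotProduct, dotProduct_add] at h1
    rw [dotProduct_comm (coordV v z) (coordV v y), hAB y hy z hz] at h1
    have h2 := heven S hS y hy
    have h3 := heven _ sdiff_subset z hz
    have h4 := hpos y hy0
    have h5 := hpos z hz0
    omega
  rcases hirr.2 _ _ hcover (fun a ha b hb => hAB a ha.2 b hb.2) with h | h
  · obtain ⟨a, ha⟩ := hne
    exact absurd (h ▸ ⟨hbase.1 (hS ha), Submodule.subset_span ha⟩ : a ∈ (∅ : Set _))
      (Set.notMem_empty a)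
  · refine Subset.antisymm hS fun b hb => ?_
    by_contra hbS
    exact absurd (h ▸ ⟨hbase.1 hb, Submodule.subset_span (mem_coe.mpr
      (mem_sdiff.mpr ⟨hb, hbS⟩))⟩ : b ∈ (∅ : Set _)) (Set.notMem_empty b)

lemma isSimpleT_of_base [DecidableEq (Fin m → ℤ)]
    (hv : Module.finrank ℤ (Submodule.span ℤ (Set.range v)) = n)
    (hsub : IsRootSubsystem v (RV v) Φ) (hbase : IsBase v Φ Δ)
    (hirr : IsIrred v Φ) (hlong : ∀ a ∈ Δ, IsType2 v a) :
    ∃ φ, IsSimpleT (Δ.image (coordV v)) φ := by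
  classical
  have hinj := coordV_injective hv
  obtain ⟨y, hy⟩ := hbase.exists_functional fun _ => 1
  obtain ⟨c, hc⟩ := exists_coeff hv
  refine ⟨fun i => ∑ j, y j * c j i, ?_, ?_, ?_, ?_⟩
  · intro a ha
    obtain ⟨a, haΔ, rfl⟩ := mem_image.mp ha
    exact (hlong a haΔ).isT2
  · intro a ha b hb hab
    obtain ⟨a, haΔ, rfl⟩ := mem_image.mp ha
    obtain ⟨b, hbΔ, rfl⟩ := mem_image.mp hb
    exact obtuse_of_base hsub hbase hlong hinj haΔ hbΔ fun e => hab (e ▸ rfl)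
  · intro a ha
    obtain ⟨a, haΔ, rfl⟩ := mem_image.mp ha
    rw [sum_coordV _ y _ a, hy a haΔ]
    · exact one_pos
    · intro l
      simp only [Finset.sum_mul]
      rw [Finset.sum_comm]
      simp only [mul_assoc, ← Finset.mul_sum, hc]
      simp
  · intro S hS hne horth
    have hS' : S = (Δ.filter fun a => coordV v a ∈ S).image (coordV v) := by
      ext a
      constructor
      · intro ha
        obtain ⟨b, hb, rfl⟩ := mem_image.mp (hS ha)
        exact mem_image_of_mem _ (mem_filter.mpr ⟨hb, ha⟩)
      · intro ha
        obtain ⟨b, hb, rfl⟩ := mem_image.mp ha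
        exact (mem_filter.mp hb).2
    have := conn_of_irred hsub hbase hirr hlong hinj (S := Δ.filter fun a => coordV v a ∈ S)
      (filter_subset _ _) (by rw [hS'] at hne; exact hne.of_image) (by
        intro a ha b hb hbS
        exact horth _ (mem_filter.mp ha).2 _ (mem_image_of_mem _ hb)
          fun h => hbS (mem_filter.mpr ⟨hb, h⟩))
    rw [this] at hS'
    exact hS'

/-- Injectivity of the enumeration, which `MatchesT` does not require, follows from
`g i i ≠ g i j`. -/
lemma matchesGram_iff [DecidableEq (Fin m → ℤ)] (hinj : Function.Injective (coordV v)) {ℓ : ℕ}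
    {g : Fin ℓ → Fin ℓ → ℤ} (hg : ∀ i j, i ≠ j → g i i ≠ g i j) :
    MatchesGram v Δ ℓ g ↔ MatchesT (Δ.image (coordV v)) ℓ g := by
  constructor
  · rintro ⟨e, -, he, hs, hgr⟩
    refine ⟨fun i => coordV v (e i), fun i => mem_image_of_mem _ (he i), ?_, hgr⟩
    intro a ha
    obtain ⟨a, haΔ, rfl⟩ := mem_image.mp ha
    obtain ⟨i, rfl⟩ := hs a haΔ
    exact ⟨i, rfl⟩
  · rintro ⟨e, he, hs, hgr⟩
    choose f hf hfe using fun i => mem_image.mp (he i)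
    refine ⟨f, ?_, hf, ?_, ?_⟩
    · intro i j hij
      by_contra hne
      refine hg i j hne ?_
      rw [← hgr, ← hgr, ← hfe i, ← hfe j, hij]
    · intro a ha
      obtain ⟨i, hi⟩ := hs _ (mem_image_of_mem _ ha)
      exact ⟨i, hinj ((hfe i).trans hi)⟩
    · intro i j
      rw [formV_eq, hfe, hfe, hgr]

lemma exists_conj_iff [DecidableEq (Fin m → ℤ)] :
    (∃ a ∈ Δ, ∃ b ∈ Δ, ConjPair v a b) ↔
      ∃ a ∈ Δ.image (coordV v), ∃ b ∈ Δ.image (coordV v), ConjT a b := by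
  simp only [exists_mem_image]
  rfl

lemma gramA_ne {ℓ : ℕ} (i j : Fin ℓ) (h : i ≠ j) : gramA ℓ i i ≠ gramA ℓ i j := by
  simp only [gramA, if_true, h, if_false]; split_ifs <;> omega

lemma gramD_ne {ℓ : ℕ} (i j : Fin ℓ) (h : i ≠ j) : gramD ℓ i i ≠ gramD ℓ i j := by
  simp only [gramD, if_true, h, if_false]; split_ifs <;> omega

end Transfer

/-- An irreducible subsystem of `R(V)` of rank ≥ 4 all of whose simple roots are
of type 2 is of type D iff it contains a pair of conjugate simple roots, and is
of type A otherwise. -/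
theorem stmt13 {n m : ℕ} (v : Fin m → Fin n → ℤ)
    (hv : Module.finrank ℤ (Submodule.span ℤ (Set.range v)) = n)
    (Φ : Set (Fin n → ℤ)) (Δ : Finset (Fin n → ℤ))
    (hsub : IsRootSubsystem v (RV v) Φ) (hbase : IsBase v Φ Δ)
    (hirr : IsIrred v Φ) (hrank : 4 ≤ Δ.card)
    (hlong : ∀ a ∈ Δ, IsType2 v a) :
    (IsTypeD v Δ ↔ ∃ a ∈ Δ, ∃ b ∈ Δ, ConjPair v a b) ∧
    ((¬ ∃ a ∈ Δ, ∃ b ∈ Δ, ConjPair v a b) → IsTypeA v Δ) := by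
  classical
  have hinj := coordV_injective hv
  obtain ⟨φ, hT⟩ := isSimpleT_of_base hv hsub hbase hirr hlong
  have hcard : (Δ.image (coordV v)).card = Δ.card := card_image_of_injective _ hinj
  rw [exists_conj_iff]
  refine ⟨⟨?_, fun h => ?_⟩, fun h => ?_⟩
  · rintro ⟨ℓ, hℓ, h⟩
    exact conj_of_D hT.t2 hℓ ((matchesGram_iff hinj gramD_ne).mp h)
  · obtain ⟨ℓ, hℓ, h⟩ := coreD hT (hcard ▸ hrank) h
    exact ⟨ℓ, hℓ, (matchesGram_iff hinj gramD_ne).mpr h⟩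
  · obtain ⟨ℓ, h⟩ := coreA hT (card_pos.mp (by omega)) h
    exact ⟨ℓ, (matchesGram_iff hinj gramA_ne).mpr h⟩
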